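/- (Mutual singularity of the conditioned measures.) Assume (H1'), (H2) and (H3) as above, and let ρ be a density matrix with p_0^{(j)} = Tr(P_j ρ) > 0 for all j. For each j define ℙ_ρ^{(j)} = (p_∞^{(j)}/p_0^{(j)}) ℙ_ρ, where p_∞^{(j)} is the a.s. limit of the martingale p_n^{(j)} = Tr(P_j ρ_n). For i ∈ {1,…,2d} let N_n(i) = #{1 ≤ k ≤ n : X_k − X_{k-1} = e_i} be the number of jumps in direction e_i up to time n. Then for each j, under ℙ_ρ^{(j)} one has N_n(i)/n → m_i^{(j)} = Tr(A_i ρ_∞^{(j)} A_i^*) almost surely for every i, and consequently the probability measures ℙ_ρ^{(1)},…,ℙ_ρ^{(N)} are pairwise mutually singular. -/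

import Mathlib

open MeasureTheory Filter Matrix Finset
open scoped ComplexOrder

noncomputable section

/-- The direction vectors `e_1, …, e_{2d}` in `ℤ^d`, with `e_{d+j} = -e_j`. -/
def dir (d : ℕ) (i : Fin (2 * d)) : Fin d → ℤ :=
  fun j => if (i : ℕ) < d then (if (j : ℕ) = (i : ℕ) then 1 else 0)
           else (if (j : ℕ) = (i : ℕ) - d then -1 else 0)

/-- The direction vectors viewed in `ℝ^d`. -/
def dirR (d : ℕ) (i : Fin (2 * d)) : Fin d → ℝ := fun j => (dir d i j : ℝ)

instance {k : ℕ} : MeasurableSpace (Matrix (Fin k) (Fin k) ℂ) := MeasurableSpace.pi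

/-- A density matrix: positive semidefinite with trace one. -/
def IsDensity {k : ℕ} (ρ : Matrix (Fin k) (Fin k) ℂ) : Prop := ρ.PosSemidef ∧ ρ.trace = 1

/-- The quantum trajectory process of the open quantum random walk. -/
structure IsQTraj {k d : ℕ} {Ω : Type} {mΩ : MeasurableSpace Ω}
    (A : Fin (2 * d) → Matrix (Fin k) (Fin k) ℂ)
    (μ : Measure Ω) (ℱ : Filtration ℕ mΩ)
    (ρ : ℕ → Ω → Matrix (Fin k) (Fin k) ℂ)
    (X : ℕ → Ω → Fin d → ℤ) : Prop where
  density : ∀ n, ∀ᵐ ω ∂μ, IsDensity (ρ n ω)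
  adapted_ρ : ∀ n, Measurable[ℱ n] (ρ n)
  adapted_X : ∀ n, Measurable[ℱ n] (X n)
  prob : ∀ (n : ℕ) (j : Fin (2 * d)),
    μ[(fun ω => if X (n + 1) ω = X n ω + dir d j then (1 : ℝ) else 0) | ℱ n]
      =ᵐ[μ] fun ω => ((A j * ρ n ω * (A j)ᴴ).trace).re
  update : ∀ (n : ℕ) (j : Fin (2 * d)), ∀ᵐ ω ∂μ,
    X (n + 1) ω = X n ω + dir d j →
      ρ (n + 1) ω = ((A j * ρ n ω * (A j)ᴴ).trace)⁻¹ • (A j * ρ n ω * (A j)ᴴ)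


lemma kronecker_aux (y : ℕ → ℝ) (L : ℝ)
    (h : Tendsto (fun n => ∑ s ∈ range n, y s / ((s:ℝ) + 1)) atTop (nhds L)) :
    Tendsto (fun n : ℕ => (n⁻¹ : ℝ) * ∑ s ∈ range n, y s) atTop (nhds 0) := by
  have h2 := h.sub h.cesaro
  rw [sub_self] at h2
  refine h2.congr' ?_
  filter_upwards [eventually_gt_atTop 0] with n hn
  have key : ∀ n : ℕ, ∑ s ∈ range n, y s = n * (∑ s ∈ range n, y s / ((s:ℝ) + 1))
      - ∑ m ∈ range n, ∑ s ∈ range m, y s / ((s:ℝ) + 1) := by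
    intro n
    induction n with
    | zero => simp
    | succ n ih =>
      rw [sum_range_succ, ih, sum_range_succ, sum_range_succ (fun m => ∑ s ∈ range m, _)]
      have : (n:ℝ) + 1 ≠ 0 := by positivity
      push_cast
      field_simp
      ring
  have hn' : (n:ℝ) ≠ 0 := by positivity
  rw [key n]
  field_simp

lemma sum_inv_sq_le : ∃ K : ℝ, 0 ≤ K ∧ ∀ n : ℕ, ∑ s ∈ range n, (1 / ((s:ℝ) + 1))^2 ≤ K := by
  have h1 : Summable (fun n : ℕ => (1:ℝ) / (n:ℝ)^2) := Real.summable_one_div_nat_pow.2 (by norm_num)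
  have h2 : Summable (fun n : ℕ => (1 / ((n:ℝ) + 1))^2) := by
    have := (summable_nat_add_iff 1).2 h1
    refine this.congr ?_
    intro n
    push_cast
    rw [div_pow, one_pow]
  exact ⟨_, tsum_nonneg (fun n => by positivity), fun n => h2.sum_le_tsum _ (fun n _ => by positivity)⟩

lemma slln_aux {Ω : Type} {mΩ : MeasurableSpace Ω} (μ : Measure Ω) [IsProbabilityMeasure μ]
    (ℱ : Filtration ℕ mΩ) (Y : ℕ → Ω → ℝ) (C : ℝ)
    (hm : ∀ n, StronglyMeasurable[ℱ (n+1)] (Y n))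
    (hC : ∀ n, ∀ᵐ ω ∂μ, |Y n ω| ≤ C)
    (h0 : ∀ n, μ[Y n | ℱ n] =ᵐ[μ] 0) :
    ∀ᵐ ω ∂μ, Tendsto (fun n : ℕ => (n⁻¹ : ℝ) * ∑ s ∈ range n, Y s ω) atTop (nhds 0) := by
  obtain ⟨K, hK0, hK⟩ := sum_inv_sq_le
  have hYint : ∀ n, Integrable (Y n) μ := fun n =>
    Integrable.of_bound ((hm n).mono (ℱ.le _)).aestronglyMeasurable C
      (by filter_upwards [hC n] with ω h; simpa using h)
  set T : ℕ → Ω → ℝ := fun n ω => ∑ s ∈ range n, Y s ω / ((s:ℝ) + 1) with hT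
  have hTm : ∀ n, StronglyMeasurable[ℱ n] (T n) := by
    intro n
    refine Finset.stronglyMeasurable_fun_sum _ ?_
    intro s hs
    have : StronglyMeasurable[ℱ n] (Y s) := (hm s).mono (ℱ.mono (by simpa using hs))
    simp only [div_eq_mul_inv]
    exact StronglyMeasurable.mul_const this _
  have hTb : ∀ n, ∃ c, ∀ᵐ ω ∂μ, ‖T n ω‖ ≤ c := by
    intro n
    refine ⟨∑ s ∈ range n, C / ((s:ℝ)+1), ?_⟩
    filter_upwards [ae_all_iff.2 hC] with ω h
    refine (norm_sum_le _ _).trans (Finset.sum_le_sum fun s _ => ?_)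
    rw [norm_div, Real.norm_eq_abs, Real.norm_eq_abs, abs_of_pos (by positivity : (0:ℝ) < (s:ℝ)+1)]
    gcongr
    exact h s
  have hTint : ∀ n, Integrable (T n) μ := fun n => by
    obtain ⟨c, hc⟩ := hTb n
    exact Integrable.of_bound ((hTm n).mono (ℱ.le _)).aestronglyMeasurable c hc
  have hstep : ∀ n, T (n+1) - T n = (1 / ((n:ℝ)+1)) • Y n := by
    intro n
    ext ω
    simp only [hT, Pi.sub_apply, sum_range_succ, Pi.smul_apply, smul_eq_mul]
    ring
  have hmart : Martingale T ℱ μ := by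
    refine martingale_of_condExp_sub_eq_zero_nat hTm hTint ?_
    intro n
    rw [hstep]
    filter_upwards [condExp_smul (1 / ((n:ℝ)+1)) (Y n) (ℱ n) (μ := μ), h0 n] with ω h1 h2
    rw [h1]; simp [h2]
  have hT2int : ∀ n, Integrable (fun ω => T n ω ^ 2) μ := by
    intro n
    obtain ⟨c, hc⟩ := hTb n
    refine Integrable.of_bound (((hTm n).mono (ℱ.le _)).pow 2).aestronglyMeasurable (c^2) ?_
    filter_upwards [hc] with ω h
    rw [norm_pow]; gcongr
  have hY2int : ∀ n, Integrable (fun ω => Y n ω ^ 2) μ := by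
    intro n
    refine Integrable.of_bound (((hm n).mono (ℱ.le _)).pow 2).aestronglyMeasurable (C^2) ?_
    filter_upwards [hC n] with ω h
    rw [norm_pow]; gcongr; exact h
  have hTYint : ∀ n, Integrable (T n * Y n) μ := by
    intro n
    obtain ⟨c, hc⟩ := hTb n
    exact (hYint n).bdd_mul ((hTm n).mono (ℱ.le _)).aestronglyMeasurable hc
  have hTY : ∀ n, ∫ ω, T n ω * Y n ω ∂μ = 0 := by
    intro n
    have h1 := condExp_mul_of_stronglyMeasurable_left (hTm n) (hTYint n) (hYint n)
    have h2 : ∫ ω, (μ[T n * Y n | ℱ n]) ω ∂μ = ∫ ω, (T n * Y n) ω ∂μ := integral_condExp (ℱ.le n)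
    change ∫ ω, (T n * Y n) ω ∂μ = 0
    rw [← h2]
    rw [integral_congr_ae (g := fun _ => (0:ℝ))]
    · simp
    · filter_upwards [h1, h0 n] with ω a b
      rw [a]; simp [b]
  have hL2 : ∀ n, ∫ ω, T n ω ^ 2 ∂μ ≤ C^2 * ∑ s ∈ range n, (1 / ((s:ℝ) + 1))^2 := by
    intro n
    induction n with
    | zero => simp [hT]
    | succ n ih =>
      have e : (fun ω => T (n+1) ω ^ 2) = fun ω => T n ω ^ 2 +
          ((2 / ((n:ℝ)+1)) * (T n * Y n) ω + (1 / ((n:ℝ)+1))^2 * Y n ω ^ 2) := by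
        ext ω
        have : T (n+1) ω = T n ω + (1 / ((n:ℝ)+1)) * Y n ω := by
          have := congrFun (hstep n) ω
          simp only [Pi.sub_apply, Pi.smul_apply, smul_eq_mul] at this
          linarith
        rw [this, Pi.mul_apply]; ring
      have hb : ∫ ω, Y n ω ^ 2 ∂μ ≤ C^2 := by
        have := integral_mono_ae (hY2int n) (integrable_const (C^2)) (by
          filter_upwards [hC n] with ω h
          rw [← sq_abs]; gcongr)
        simpa using this
      have hi : Integrable (fun ω => (2 / ((n:ℝ)+1)) * (T n * Y n) ω
          + (1 / ((n:ℝ)+1))^2 * Y n ω ^ 2) μ :=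
        ((hTYint n).const_mul _).add ((hY2int n).const_mul _)
      rw [e, integral_add (hT2int n) hi,
        integral_add ((hTYint n).const_mul _) ((hY2int n).const_mul _),
        integral_const_mul, integral_const_mul, sum_range_succ]
      have h3 := hTY n
      simp only [Pi.mul_apply] at *
      rw [h3]
      have : (1 / ((n:ℝ)+1))^2 * ∫ ω, Y n ω ^ 2 ∂μ ≤ (1 / ((n:ℝ)+1))^2 * C^2 := by gcongr
      linarith
  have hbdd : ∀ n, eLpNorm (T n) 1 μ ≤ ((1 + C^2 * K).toNNReal : ENNReal) := by
    intro n
    rw [eLpNorm_one_eq_lintegral_enorm, ← ofReal_integral_norm_eq_lintegral_enorm (hTint n)]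
    refine ENNReal.ofReal_le_ofReal ?_
    have h1 : ∫ ω, ‖T n ω‖ ∂μ ≤ ∫ ω, (1 + T n ω ^ 2) ∂μ := by
      refine integral_mono (hTint n).norm ((integrable_const _).add (hT2int n)) ?_
      intro ω
      simp only [Real.norm_eq_abs]
      rw [← sq_abs]
      nlinarith [sq_nonneg (|T n ω| - 1), abs_nonneg (T n ω)]
    rw [integral_add (integrable_const _) (hT2int n)] at h1
    simp only [integral_const, probReal_univ, one_smul] at h1
    have h2 := hL2 n
    have h3 : C^2 * ∑ s ∈ range n, (1 / ((s:ℝ) + 1))^2 ≤ C^2 * K := by gcongr; exact hK n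
    linarith
  filter_upwards [hmart.submartingale.exists_ae_tendsto_of_bdd hbdd] with ω ⟨c, hc⟩
  exact kronecker_aux (fun s => Y s ω) c hc

lemma slln {Ω : Type} {mΩ : MeasurableSpace Ω} (μ : Measure Ω) [IsProbabilityMeasure μ]
    (ℱ : Filtration ℕ mΩ) (f g : ℕ → Ω → ℝ) (C : ℝ)
    (hm : ∀ n, StronglyMeasurable[ℱ (n+1)] (f n))
    (hC : ∀ n, ∀ᵐ ω ∂μ, |f n ω| ≤ C)
    (hg : ∀ n, μ[f n | ℱ n] =ᵐ[μ] g n) :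
    ∀ᵐ ω ∂μ, Tendsto (fun n : ℕ => (n⁻¹ : ℝ) * ∑ s ∈ range n, (f s ω - g s ω))
      atTop (nhds 0) := by
  have hfint : ∀ n, Integrable (f n) μ := fun n =>
    Integrable.of_bound ((hm n).mono (ℱ.le _)).aestronglyMeasurable C
      (by filter_upwards [hC n] with ω h; simpa using h)
  have hC0 : 0 ≤ C := by
    obtain ⟨ω, h⟩ := (hC 0).exists
    exact (abs_nonneg _).trans h
  have key := slln_aux μ ℱ (fun n => f n - μ[f n | ℱ n]) (C + C)
    (fun n => (hm n).sub (stronglyMeasurable_condExp.mono (ℱ.mono (Nat.le_succ n))))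
    (fun n => by
      have h2 : ∀ᵐ ω ∂μ, |(μ[f n | ℱ n]) ω| ≤ C :=
        ae_bdd_abs_condExp_of_ae_bdd_abs (hC n)
      filter_upwards [hC n, h2] with ω a b
      rw [Pi.sub_apply]
      exact (abs_sub _ _).trans (add_le_add a b))
    (fun n => by
      have h1 := condExp_sub (hfint n) (integrable_condExp (f := f n) (m := ℱ n) (μ := μ)) (ℱ n)
      have h2 : μ[μ[f n | ℱ n] | ℱ n] = μ[f n | ℱ n] :=
        condExp_of_stronglyMeasurable (ℱ.le n) stronglyMeasurable_condExp integrable_condExp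
      rw [h2, sub_self] at h1
      exact h1)
  filter_upwards [key, ae_all_iff.2 hg] with ω h1 h2
  refine h1.congr fun n => ?_
  congr 1
  refine Finset.sum_congr rfl fun s _ => ?_
  rw [Pi.sub_apply, h2 s]

open scoped MatrixOrder in
lemma density_entry_le {k : ℕ} {M : Matrix (Fin k) (Fin k) ℂ} (hM : IsDensity M) (a b : Fin k) :
    ‖M a b‖ ≤ 1 := by
  obtain ⟨h1, h2⟩ := hM
  obtain ⟨B, rfl⟩ := CStarAlgebra.nonneg_iff_eq_star_mul_self.mp h1.nonneg
  have ht : ∑ a, ∑ c, ‖B c a‖^2 = 1 := by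
    have h3 : (∑ a, ∑ c, ((‖B c a‖^2 : ℝ) : ℂ)) = 1 := by
      rw [← h2]
      simp only [Matrix.trace, Matrix.diag, Matrix.mul_apply, Matrix.star_apply]
      refine Finset.sum_congr rfl fun a _ => Finset.sum_congr rfl fun c _ => ?_
      rw [RCLike.star_def, RCLike.conj_mul]
      simp
    exact_mod_cast h3
  have hs : ∀ a, ∑ c, ‖B c a‖^2 ≤ 1 := fun a => by
    rw [← ht]
    exact Finset.single_le_sum (f := fun a => ∑ c, ‖B c a‖^2)
      (fun a _ => Finset.sum_nonneg fun c _ => by positivity) (Finset.mem_univ a)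
  rw [Matrix.mul_apply]
  calc ‖∑ c, (star B) a c * B c b‖ ≤ ∑ c, ‖(star B) a c * B c b‖ := norm_sum_le _ _
    _ ≤ ∑ c, (‖B c a‖^2 + ‖B c b‖^2) / 2 := by
        refine Finset.sum_le_sum fun c _ => ?_
        rw [norm_mul, Matrix.star_apply, norm_star]
        nlinarith [sq_nonneg (‖B c a‖ - ‖B c b‖)]
    _ = (∑ c, ‖B c a‖^2 + ∑ c, ‖B c b‖^2) / 2 := by
        rw [← Finset.sum_add_distrib, Finset.sum_div]
    _ ≤ 1 := by linarith [hs a, hs b]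

lemma psd_of_tendsto {k : ℕ} {u : ℕ → Matrix (Fin k) (Fin k) ℂ} {σ : Matrix (Fin k) (Fin k) ℂ}
    (hu : ∀ n, (u n).PosSemidef) (h : Tendsto u atTop (nhds σ)) : σ.PosSemidef := by
  rw [Matrix.posSemidef_iff_dotProduct_mulVec]
  constructor
  · have h1 : Tendsto (fun n => (u n)ᴴ) atTop (nhds σᴴ) :=
      ((continuous_id.matrix_conjTranspose).tendsto σ).comp h
    have h2 : (fun n => (u n)ᴴ) = u := funext fun n => (hu n).1
    rw [h2] at h1
    exact tendsto_nhds_unique h1 h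
  · intro v
    have hc : Continuous (fun M : Matrix (Fin k) (Fin k) ℂ => star v ⬝ᵥ (M *ᵥ v)) := by fun_prop
    exact ge_of_tendsto' ((hc.tendsto σ).comp h) fun n => (hu n).dotProduct_mulVec_nonneg v

lemma psd_trace_im {k : ℕ} {M : Matrix (Fin k) (Fin k) ℂ} (h : M.PosSemidef) :
    M.trace = ((M.trace.re : ℝ) : ℂ) := by
  have := (Complex.le_def.1 h.trace_nonneg).2
  apply Complex.ext
  · simp
  · simpa using this.symm

lemma psd_real_smul {k : ℕ} {M : Matrix (Fin k) (Fin k) ℂ} (h : M.PosSemidef) {c : ℝ} (hc : 0 ≤ c) :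
    (c • M).PosSemidef := by
  have : c • M = (c : ℂ) • M := by
    ext a b; simp
  rw [this]
  exact h.smul (by exact_mod_cast hc)

lemma mat_tendsto_iff {k : ℕ} {u : ℕ → Matrix (Fin k) (Fin k) ℂ} {σ : Matrix (Fin k) (Fin k) ℂ} :
    Tendsto u atTop (nhds σ) ↔ ∀ a b, Tendsto (fun n => u n a b) atTop (nhds (σ a b)) := by
  constructor
  · intro h a b
    exact ((continuous_id.matrix_elem a b).tendsto σ).comp h
  · intro h
    exact tendsto_pi_nhds.2 fun a => tendsto_pi_nhds.2 fun b => h a b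

lemma det_part {k d : ℕ} (A : Fin (2 * d) → Matrix (Fin k) (Fin k) ℂ)
    (Q : Matrix (Fin k) (Fin k) ℂ) (hsa : Qᴴ = Q) (hid : Q * Q = Q)
    (hcomm : ∀ i, Q * A i = A i * Q) (r : Matrix (Fin k) (Fin k) ℂ)
    (huniq : ∀ σ, IsDensity σ → Q * σ * Q = σ →
      (∑ i, (A i * Q) * σ * (A i * Q)ᴴ) = σ → σ = r)
    (x : ℕ → Matrix (Fin k) (Fin k) ℂ) (hx : ∀ n, IsDensity (x n))
    (J : Fin (2 * d) → ℕ → ℝ) (hJ : ∀ i s, |J i s| ≤ 1) (hJ1 : ∀ s, ∑ i, J i s = 1)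
    (hE : ∀ i, Tendsto (fun n : ℕ => (n⁻¹ : ℝ) • ∑ s ∈ range n,
      (J i s • x (s+1) - A i * x s * (A i)ᴴ)) atTop (nhds 0))
    (p : ℝ) (hp : 0 < p) (hlim : Tendsto (fun n => ((Q * x n).trace).re) atTop (nhds p))
    (i : Fin (2 * d)) :
    Tendsto (fun n : ℕ => (n⁻¹ : ℝ) * ∑ s ∈ range n, J i s) atTop
      (nhds ((A i * r * (A i)ᴴ).trace.re)) := by
  have hcommH : ∀ i, (A i)ᴴ * Q = Q * (A i)ᴴ := by
    intro i
    have := congrArg conjTranspose (hcomm i)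
    rwa [conjTranspose_mul, conjTranspose_mul, hsa] at this
  set S : ℕ → Matrix (Fin k) (Fin k) ℂ := fun n => (n⁻¹ : ℝ) • ∑ s ∈ range n, x s with hSdef
  have hASA : ∀ i n, A i * S n * (A i)ᴴ = (n⁻¹ : ℝ) • ∑ s ∈ range n, A i * x s * (A i)ᴴ := by
    intro i n
    simp only [hSdef, Matrix.mul_smul, Matrix.smul_mul, Finset.mul_sum, Finset.sum_mul]
  have hbd : Tendsto (fun n : ℕ => (n⁻¹ : ℝ) • (x n - x 0)) atTop (nhds 0) := by
    rw [mat_tendsto_iff]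
    intro a b
    have h2 : Tendsto (fun n : ℕ => (n⁻¹ : ℝ) * 2) atTop (nhds 0) := by
      simpa using (tendsto_inv_atTop_nhds_zero_nat (𝕜 := ℝ)).mul_const 2
    refine squeeze_zero_norm (fun n => ?_) h2
    rw [Matrix.smul_apply, norm_smul, Matrix.sub_apply]
    have h3 : ‖((n:ℝ)⁻¹)‖ = (n:ℝ)⁻¹ := by rw [Real.norm_eq_abs, abs_of_nonneg (by positivity)]
    rw [h3]
    gcongr
    refine (norm_sub_le _ _).trans ?_
    linarith [density_entry_le (hx n) a b, density_entry_le (hx 0) a b]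
  have hS : Tendsto (fun n => S n - ∑ i, A i * S n * (A i)ᴴ) atTop (nhds 0) := by
    have h1 := (tendsto_finsetSum Finset.univ fun i _ => hE i).sub hbd
    simp only [Finset.sum_const_zero, sub_zero] at h1
    refine h1.congr fun n => ?_
    have h2 : ∑ s ∈ range n, x (s+1) = ∑ s ∈ range n, x s + (x n - x 0) := by
      rw [← Finset.sum_range_sub x n, ← Finset.sum_add_distrib]
      simp
    have h3 : ∑ i, (n⁻¹ : ℝ) • ∑ s ∈ range n, (J i s • x (s+1) - A i * x s * (A i)ᴴ)
        = (n⁻¹ : ℝ) • ∑ s ∈ range n, x (s+1) - ∑ i, A i * S n * (A i)ᴴ := by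
      simp only [hASA, Finset.sum_sub_distrib, smul_sub]
      congr 1
      rw [← Finset.smul_sum, Finset.sum_comm]
      congr 1
      refine Finset.sum_congr rfl fun s _ => ?_
      rw [← Finset.sum_smul, hJ1, one_smul]
    rw [h3, h2, smul_add]
    simp only [hSdef]
    abel
  set R : ℕ → Matrix (Fin k) (Fin k) ℂ := fun n => Q * S n * Q with hRdef
  have hblock : ∀ i M, (A i * Q) * (Q * M * Q) * (A i * Q)ᴴ = Q * (A i * M * (A i)ᴴ) * Q := by
    intro i M
    rw [conjTranspose_mul, hsa]
    calc (A i * Q) * (Q * M * Q) * (Q * (A i)ᴴ) = A i * (Q * Q) * M * (Q * Q) * (A i)ᴴ := by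
          simp only [Matrix.mul_assoc]
      _ = (A i * Q) * M * (Q * (A i)ᴴ) := by simp only [hid, Matrix.mul_assoc]
      _ = (Q * A i) * M * ((A i)ᴴ * Q) := by rw [hcomm, hcommH]
      _ = _ := by simp only [Matrix.mul_assoc]
  have hR : Tendsto (fun n => R n - ∑ i, (A i * Q) * R n * (A i * Q)ᴴ) atTop (nhds 0) := by
    have hc : Continuous (fun M : Matrix (Fin k) (Fin k) ℂ => Q * M * Q) := by fun_prop
    have h1 := (hc.tendsto 0).comp hS
    simp only [Matrix.mul_zero, Matrix.zero_mul] at h1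
    refine h1.congr fun n => ?_
    simp only [hRdef, hblock, Function.comp, Matrix.mul_sub, Matrix.sub_mul, Finset.mul_sum,
      Finset.sum_mul]
  have hSpsd : ∀ n, (S n).PosSemidef := fun n =>
    psd_real_smul (Matrix.posSemidef_sum _ fun s _ => (hx s).1) (by positivity)
  have hRpsd : ∀ n, (R n).PosSemidef := fun n => by
    have := (hSpsd n).mul_mul_conjTranspose_same Q
    rwa [hsa] at this
  have hRtr : Tendsto (fun n => (R n).trace.re) atTop (nhds p) := by
    refine hlim.cesaro.congr fun n => ?_
    have : (R n).trace = (Q * S n).trace := by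
      simp only [hRdef]
      rw [Matrix.trace_mul_comm, ← Matrix.mul_assoc, hid]
    rw [this]
    simp only [hSdef, Matrix.mul_smul, Finset.mul_sum, Matrix.trace_smul, Matrix.trace_sum,
      Complex.smul_re, Complex.re_sum, smul_eq_mul]
  have hQRQ : ∀ n, Q * R n * Q = R n := fun n => by
    simp only [hRdef]
    calc Q * (Q * S n * Q) * Q = (Q * Q) * S n * (Q * Q) := by simp only [Matrix.mul_assoc]
      _ = _ := by rw [hid]
  have hK0 : IsCompact {M : Matrix (Fin k) (Fin k) ℂ | ∀ a b, ‖M a b‖ ≤ 1} := by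
    have h1 := isCompact_univ_pi (fun _ : Fin k => isCompact_univ_pi
      (fun _ : Fin k => isCompact_closedBall (0:ℂ) 1))
    have h2 : {M : Matrix (Fin k) (Fin k) ℂ | ∀ a b, ‖M a b‖ ≤ 1} =
        (Set.univ.pi fun _ : Fin k => Set.univ.pi fun _ : Fin k => Metric.closedBall (0:ℂ) 1) := by
      refine Set.ext fun M => ⟨fun h a _ b _ => ?_, fun h a b => ?_⟩
      · exact mem_closedBall_zero_iff.2 (h a b)
      · exact mem_closedBall_zero_iff.1 (h a trivial b trivial)
    rw [h2]
    exact h1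
  have hSK : ∀ n, S n ∈ {M : Matrix (Fin k) (Fin k) ℂ | ∀ a b, ‖M a b‖ ≤ 1} := by
    intro n a b
    simp only [hSdef, Matrix.smul_apply, Matrix.sum_apply, norm_smul]
    have h3 : ‖((n:ℝ)⁻¹)‖ = (n:ℝ)⁻¹ := by rw [Real.norm_eq_abs, abs_of_nonneg (by positivity)]
    rw [h3]
    have h4 : ‖∑ s ∈ range n, x s a b‖ ≤ n := by
      refine (norm_sum_le _ _).trans ?_
      refine (Finset.sum_le_sum fun s _ => density_entry_le (hx s) a b).trans ?_
      simp
    calc (n:ℝ)⁻¹ * _ ≤ (n:ℝ)⁻¹ * n := by gcongr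
      _ ≤ 1 := inv_mul_le_one
  have hRlim : Tendsto R atTop (nhds (p • r)) := by
    refine tendsto_of_subseq_tendsto fun ns hns => ?_
    have : FirstCountableTopology (Matrix (Fin k) (Fin k) ℂ) :=
      inferInstanceAs (FirstCountableTopology (Fin k → Fin k → ℂ))
    obtain ⟨τ, -, φ, hφ, hτ⟩ := hK0.tendsto_subseq (fun n => hSK (ns n))
    refine ⟨φ, ?_⟩
    have hc : Continuous (fun M : Matrix (Fin k) (Fin k) ℂ => Q * M * Q) := by fun_prop
    have h1 : Tendsto (fun n => R (ns (φ n))) atTop (nhds (Q * τ * Q)) := (hc.tendsto τ).comp hτ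
    set σ := Q * τ * Q with hσ
    have hsub : Tendsto (fun n => ns (φ n)) atTop atTop := hns.comp hφ.tendsto_atTop
    have hpsd : σ.PosSemidef := psd_of_tendsto (fun n => hRpsd _) h1
    have htr : σ.trace.re = p := by
      have hc2 : Continuous (fun M : Matrix (Fin k) (Fin k) ℂ => M.trace.re) :=
        Complex.continuous_re.comp (continuous_id.matrix_trace)
      exact tendsto_nhds_unique ((hc2.tendsto σ).comp h1) (hRtr.comp hsub)
    have hQ : Q * σ * Q = σ := by
      refine tendsto_nhds_unique ((hc.tendsto σ).comp h1) (h1.congr fun n => ?_)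
      exact (hQRQ _).symm
    have hinv : σ - ∑ i, (A i * Q) * σ * (A i * Q)ᴴ = 0 := by
      have hc3 : Continuous (fun M : Matrix (Fin k) (Fin k) ℂ =>
          M - ∑ i, (A i * Q) * M * (A i * Q)ᴴ) := by fun_prop
      exact tendsto_nhds_unique ((hc3.tendsto σ).comp h1) (hR.comp hsub)
    have hfin : p⁻¹ • σ = r := by
      refine huniq _ ⟨psd_real_smul hpsd (by positivity), ?_⟩ ?_ ?_
      · rw [Matrix.trace_smul, psd_trace_im hpsd, htr]
        rw [Complex.real_smul]
        have : (p:ℂ) ≠ 0 := by exact_mod_cast hp.ne'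
        push_cast
        field_simp
      · rw [Matrix.mul_smul, Matrix.smul_mul, hQ]
      · simp only [Matrix.mul_smul, Matrix.smul_mul, ← Finset.smul_sum]
        rw [← sub_eq_zero.1 hinv]
    have : p • r = σ := by
      rw [← hfin, smul_smul, mul_inv_cancel₀ hp.ne', one_smul]
    rw [this]
    exact h1
  -- final step
  have hA : Tendsto (fun n => (A i * R n * (A i)ᴴ).trace.re) atTop
      (nhds (p * (A i * r * (A i)ᴴ).trace.re)) := by
    have hc2 : Continuous (fun M : Matrix (Fin k) (Fin k) ℂ => (A i * M * (A i)ᴴ).trace.re) :=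
      Complex.continuous_re.comp (Continuous.matrix_trace (by fun_prop))
    have := (hc2.tendsto _).comp hRlim
    simp only [Matrix.mul_smul, Matrix.smul_mul, Matrix.trace_smul, Complex.smul_re,
      smul_eq_mul] at this
    exact this
  have hB : Tendsto (fun n : ℕ => (n⁻¹ : ℝ) * ∑ s ∈ range n, J i s * (Q * x (s+1)).trace.re
      - (A i * R n * (A i)ᴴ).trace.re) atTop (nhds 0) := by
    have hc2 : Continuous (fun M : Matrix (Fin k) (Fin k) ℂ => (Q * M).trace.re) :=
      Complex.continuous_re.comp (Continuous.matrix_trace (by fun_prop))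
    have h1 := (hc2.tendsto _).comp (hE i)
    simp only [Matrix.mul_zero, Matrix.trace_zero, Complex.zero_re] at h1
    refine h1.congr fun n => ?_
    have h2 : (A i * R n * (A i)ᴴ).trace = (Q * (A i * S n * (A i)ᴴ)).trace := by
      have h4 := hcomm i
      have h5 := hcommH i
      have e : A i * R n * (A i)ᴴ = Q * (A i * S n * (A i)ᴴ) * Q := by
        simp only [hRdef]
        calc A i * (Q * S n * Q) * (A i)ᴴ = (A i * Q) * S n * (Q * (A i)ᴴ) := by
              simp only [Matrix.mul_assoc]
          _ = (Q * A i) * S n * ((A i)ᴴ * Q) := by rw [h4, h5]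
          _ = _ := by simp only [Matrix.mul_assoc]
      rw [e, Matrix.trace_mul_comm, ← Matrix.mul_assoc, hid]
    rw [h2, hASA]
    simp only [Function.comp, Matrix.mul_smul, Finset.mul_sum, Matrix.trace_smul, Matrix.trace_sum,
      Complex.smul_re, Complex.re_sum, smul_eq_mul, Matrix.trace_sub,
      Complex.sub_re, Finset.sum_sub_distrib, mul_sub]
  have hD : Tendsto (fun n : ℕ => (n⁻¹ : ℝ) * ∑ s ∈ range n, J i s * ((Q * x (s+1)).trace.re - p))
      atTop (nhds 0) := by
    refine Filter.Tendsto.cesaro ?_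
    have h1 : Tendsto (fun s => |(Q * x (s+1)).trace.re - p|) atTop (nhds 0) := by
      have := ((hlim.comp (tendsto_add_atTop_nat 1)).sub_const p).abs
      simpa using this
    refine squeeze_zero_norm (fun s => ?_) h1
    rw [norm_mul, Real.norm_eq_abs, Real.norm_eq_abs]
    exact mul_le_of_le_one_left (abs_nonneg _) (hJ i s)
  have hF := (((hB.add hA).sub hD).const_mul p⁻¹)
  have e : p⁻¹ * (0 + p * (A i * r * (A i)ᴴ).trace.re - 0) = (A i * r * (A i)ᴴ).trace.re := by
    field_simp; ring
  rw [e] at hF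
  refine hF.congr fun n => ?_
  simp only [mul_sub, Finset.sum_sub_distrib, ← Finset.sum_mul]
  field_simp
  ring

lemma meas_entry {k : ℕ} {Ω : Type} {m : MeasurableSpace Ω} {u : Ω → Matrix (Fin k) (Fin k) ℂ}
    (hu : Measurable u) (a b : Fin k) : Measurable (fun ω => u ω a b) :=
  (measurable_pi_apply b).comp ((measurable_pi_apply a).comp hu)

lemma meas_conj {k : ℕ} {Ω : Type} {m : MeasurableSpace Ω} {u : Ω → Matrix (Fin k) (Fin k) ℂ}
    (hu : Measurable u) (B C : Matrix (Fin k) (Fin k) ℂ) (a b : Fin k) :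
    Measurable (fun ω => (B * u ω * C) a b) := by
  simp only [Matrix.mul_apply]
  refine Finset.measurable_fun_sum _ fun c _ => ?_
  refine Measurable.mul_const ?_ _
  refine Finset.measurable_fun_sum _ fun e _ => ?_
  exact (meas_entry hu e c).const_mul _

lemma meas_trace {k : ℕ} {Ω : Type} {m : MeasurableSpace Ω} {u : Ω → Matrix (Fin k) (Fin k) ℂ}
    (hu : Measurable u) (B C : Matrix (Fin k) (Fin k) ℂ) :
    Measurable (fun ω => (B * u ω * C).trace) := by
  simp only [Matrix.trace, Matrix.diag]
  exact Finset.measurable_fun_sum _ fun c _ => meas_conj hu B C c c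

lemma dir_injective {d : ℕ} {i j : Fin (2 * d)} (h : dir d i = dir d j) : i = j := by
  have hi := i.2
  have hj := j.2
  ext
  by_cases h1 : (i:ℕ) < d <;> by_cases h2 : (j:ℕ) < d
  · have := congrFun h ⟨i, h1⟩
    simp [dir, h1, h2] at this
    omega
  · have := congrFun h ⟨i, h1⟩
    simp only [dir, h1, h2, if_true, if_false] at this
    split_ifs at this <;> omega
  · have := congrFun h ⟨j, h2⟩
    simp only [dir, h1, h2, if_true, if_false] at this
    split_ifs at this <;> omega
  · have := congrFun h ⟨(i:ℕ) - d, by omega⟩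
    simp only [dir, h1, h2, if_true, if_false] at this
    split_ifs at this <;> omega

lemma meas_jump {k d : ℕ} {Ω : Type} {mΩ : MeasurableSpace Ω}
    {A : Fin (2 * d) → Matrix (Fin k) (Fin k) ℂ}
    {μ : Measure Ω} {ℱ : Filtration ℕ mΩ}
    {ρ : ℕ → Ω → Matrix (Fin k) (Fin k) ℂ} {X : ℕ → Ω → Fin d → ℤ}
    (hQT : IsQTraj A μ ℱ ρ X) (i : Fin (2 * d)) (n : ℕ) :
    Measurable[ℱ (n+1)] (fun ω => if X (n + 1) ω = X n ω + dir d i then (1 : ℝ) else 0) := by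
  have h1 : Measurable[ℱ (n+1)] (X (n+1)) := hQT.adapted_X (n+1)
  have h2 : Measurable[ℱ (n+1)] (X n) := (hQT.adapted_X n).mono (ℱ.mono (Nat.le_succ n)) le_rfl
  have h3 : Measurable[ℱ (n+1)] (fun ω => X (n+1) ω - X n ω) := h1.sub h2
  have h4 : MeasurableSet[ℱ (n+1)] {ω | X (n + 1) ω = X n ω + dir d i} := by
    have h5 := h3 (measurableSet_singleton (dir d i))
    convert h5 using 1
    ext ω
    simp [sub_eq_iff_eq_add']
  exact Measurable.ite h4 measurable_const measurable_const

lemma ce_part {k d : ℕ} {Ω : Type} {mΩ : MeasurableSpace Ω}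
    (A : Fin (2 * d) → Matrix (Fin k) (Fin k) ℂ)
    (μ : Measure Ω) [IsProbabilityMeasure μ] (ℱ : Filtration ℕ mΩ)
    (ρ : ℕ → Ω → Matrix (Fin k) (Fin k) ℂ) (X : ℕ → Ω → Fin d → ℤ)
    (hQT : IsQTraj A μ ℱ ρ X) (φ : ℂ →L[ℝ] ℝ) (hφ : ∀ z, |φ z| ≤ ‖z‖)
    (i : Fin (2 * d)) (a b : Fin k) :
    ∀ᵐ ω ∂μ, Tendsto (fun n : ℕ => (n⁻¹ : ℝ) * ∑ s ∈ range n,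
      ((if X (s + 1) ω = X s ω + dir d i then (1 : ℝ) else 0) * φ (ρ (s+1) ω a b)
        - φ ((A i * ρ s ω * (A i)ᴴ) a b))) atTop (nhds 0) := by
  refine slln μ ℱ
    (fun s ω => (if X (s + 1) ω = X s ω + dir d i then (1 : ℝ) else 0) * φ (ρ (s+1) ω a b))
    (fun s ω => φ ((A i * ρ s ω * (A i)ᴴ) a b)) 1 ?_ ?_ ?_
  · intro n
    have h1 : Measurable[ℱ (n+1)] (fun ω => φ (ρ (n+1) ω a b)) :=
      φ.continuous.measurable.comp (meas_entry (hQT.adapted_ρ (n+1)) a b)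
    exact ((meas_jump hQT i n).mul h1).stronglyMeasurable
  · intro n
    filter_upwards [hQT.density (n+1)] with ω h
    have h1 := (hφ (ρ (n+1) ω a b)).trans (density_entry_le h a b)
    split_ifs <;> simp [h1]
  · intro n
    set h : Ω → ℝ := fun ω =>
      φ (((A i * ρ n ω * (A i)ᴴ).trace)⁻¹ * (A i * ρ n ω * (A i)ᴴ) a b) with hh
    have hm : StronglyMeasurable[ℱ n] h := by
      have h1 : Measurable[ℱ n] h := φ.continuous.measurable.comp
        ((meas_trace (hQT.adapted_ρ n) (A i) (A i)ᴴ).inv.mul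
          (meas_conj (hQT.adapted_ρ n) (A i) (A i)ᴴ a b))
      exact h1.stronglyMeasurable
    have hb : ∀ᵐ ω ∂μ, ‖h ω‖ ≤ 1 := by
      filter_upwards [hQT.density n] with ω hd
      have hB := hd.1.mul_mul_conjTranspose_same (A i)
      refine (hφ _).trans ?_
      by_cases h0 : (A i * ρ n ω * (A i)ᴴ).trace = 0
      · simp [h0]
      · have h2 := psd_trace_im hB
        have h3 : IsDensity (((A i * ρ n ω * (A i)ᴴ).trace)⁻¹ • (A i * ρ n ω * (A i)ᴴ)) := by
          constructor
          · have hnn := hB.trace_nonneg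
            exact hB.smul (inv_nonneg.2 hnn)
          · rw [Matrix.trace_smul, smul_eq_mul, inv_mul_cancel₀ h0]
        simpa using density_entry_le h3 a b
    have hJi : Integrable (fun ω => if X (n + 1) ω = X n ω + dir d i then (1 : ℝ) else 0) μ := by
      refine Integrable.of_bound
        ((meas_jump hQT i n).mono (ℱ.le _) le_rfl).aestronglyMeasurable 1 (ae_of_all _ fun ω => ?_)
      split_ifs <;> simp
    have h1 := condExp_stronglyMeasurable_mul_of_bound (ℱ.le n) hm hJi 1 hb
    have h2 : (fun ω => (if X (n + 1) ω = X n ω + dir d i then (1 : ℝ) else 0)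
        * φ (ρ (n+1) ω a b)) =ᵐ[μ]
        h * (fun ω => if X (n + 1) ω = X n ω + dir d i then (1 : ℝ) else 0) := by
      filter_upwards [hQT.update n i] with ω hu
      rw [Pi.mul_apply]
      by_cases hX : X (n + 1) ω = X n ω + dir d i
      · rw [hu hX]; simp [hX, hh]
      · simp [hX]
    refine (condExp_congr_ae h2).trans (h1.trans ?_)
    filter_upwards [hQT.prob n i, hQT.density n] with ω hp hd
    rw [Pi.mul_apply, hp]
    have hB := hd.1.mul_mul_conjTranspose_same (A i)
    simp only [hh]
    by_cases h0 : (A i * ρ n ω * (A i)ᴴ).trace = 0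
    · have := hB.trace_eq_zero_iff.1 h0
      simp [this]
    · have h2 := psd_trace_im hB
      set t := (A i * ρ n ω * (A i)ᴴ).trace.re with ht
      rw [h2]
      have ht0 : t ≠ 0 := by
        intro h; rw [h] at h2; exact h0 (by simpa using h2)
      have e : ((t:ℂ))⁻¹ * (A i * ρ n ω * (A i)ᴴ) a b = (t⁻¹) • (A i * ρ n ω * (A i)ᴴ) a b := by
        rw [Complex.real_smul]; push_cast; rfl
      rw [e, map_smul, smul_eq_mul]
      field_simp

lemma ce_mat {k d : ℕ} {Ω : Type} {mΩ : MeasurableSpace Ω}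
    (A : Fin (2 * d) → Matrix (Fin k) (Fin k) ℂ)
    (μ : Measure Ω) [IsProbabilityMeasure μ] (ℱ : Filtration ℕ mΩ)
    (ρ : ℕ → Ω → Matrix (Fin k) (Fin k) ℂ) (X : ℕ → Ω → Fin d → ℤ)
    (hQT : IsQTraj A μ ℱ ρ X) :
    ∀ᵐ ω ∂μ, ∀ i, Tendsto (fun n : ℕ => (n⁻¹ : ℝ) • ∑ s ∈ range n,
      ((if X (s + 1) ω = X s ω + dir d i then (1 : ℝ) else 0) • ρ (s+1) ω
        - A i * ρ s ω * (A i)ᴴ)) atTop (nhds 0) := by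
  have hre : ∀ᵐ ω ∂μ, ∀ i a b, _ := ae_all_iff.2 fun i => ae_all_iff.2 fun a => ae_all_iff.2
    fun b => ce_part A μ ℱ ρ X hQT Complex.reCLM (fun z => Complex.abs_re_le_norm z) i a b
  have him : ∀ᵐ ω ∂μ, ∀ i a b, _ := ae_all_iff.2 fun i => ae_all_iff.2 fun a => ae_all_iff.2
    fun b => ce_part A μ ℱ ρ X hQT Complex.imCLM (fun z => Complex.abs_im_le_norm z) i a b
  filter_upwards [hre, him] with ω h1 h2 i
  rw [mat_tendsto_iff]
  intro a b
  have h3 := (Complex.continuous_ofReal.tendsto 0).comp (h1 i a b)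
  have h4 := ((Complex.continuous_ofReal.tendsto 0).comp (h2 i a b)).mul_const Complex.I
  have h5 := h3.add h4
  simp only [Complex.ofReal_zero, zero_mul, add_zero] at h5
  refine h5.congr fun n => ?_
  simp only [Function.comp]
  rw [← Complex.re_add_im (((n⁻¹ : ℝ) • ∑ s ∈ range n,
      ((if X (s + 1) ω = X s ω + dir d i then (1 : ℝ) else 0) • ρ (s+1) ω
        - A i * ρ s ω * (A i)ᴴ)) a b)]
  simp only [Matrix.smul_apply, Matrix.sum_apply, Matrix.sub_apply, Complex.smul_re,
    Complex.smul_im, Complex.re_sum, Complex.im_sum, Complex.sub_re, Complex.sub_im, smul_eq_mul,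
    Complex.reCLM_apply, Complex.imCLM_apply]

lemma jump_sum {k d : ℕ} {Ω : Type} {mΩ : MeasurableSpace Ω}
    (A : Fin (2 * d) → Matrix (Fin k) (Fin k) ℂ) (hA : ∑ j, (A j)ᴴ * A j = 1)
    (μ : Measure Ω) [IsProbabilityMeasure μ] (ℱ : Filtration ℕ mΩ)
    (ρ : ℕ → Ω → Matrix (Fin k) (Fin k) ℂ) (X : ℕ → Ω → Fin d → ℤ)
    (hQT : IsQTraj A μ ℱ ρ X) (n : ℕ) :
    ∀ᵐ ω ∂μ, ∑ i, (if X (n + 1) ω = X n ω + dir d i then (1 : ℝ) else 0) = 1 := by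
  have hJi : ∀ i, Integrable (fun ω => if X (n + 1) ω = X n ω + dir d i then (1 : ℝ) else 0) μ := by
    intro i
    refine Integrable.of_bound
      ((meas_jump hQT i n).mono (ℱ.le _) le_rfl).aestronglyMeasurable 1 (ae_of_all _ fun ω => ?_)
    split_ifs <;> simp
  have hle : ∀ ω, ∑ i, (if X (n + 1) ω = X n ω + dir d i then (1 : ℝ) else 0) ≤ 1 := by
    intro ω
    by_cases h : ∃ i, X (n + 1) ω = X n ω + dir d i
    · obtain ⟨i, hi⟩ := h
      rw [Finset.sum_eq_single i]
      · simp [hi]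
      · intro j _ hj
        rw [if_neg]
        intro h
        rw [hi] at h
        exact hj (dir_injective (add_left_cancel h)).symm
      · simp
    · push Not at h
      simp [h]
  have hs : Integrable (fun ω => ∑ i, (if X (n + 1) ω = X n ω + dir d i then (1 : ℝ) else 0)) μ :=
    integrable_finsetSum _ fun i _ => hJi i
  have hint : ∫ ω, (1 - ∑ i, (if X (n + 1) ω = X n ω + dir d i then (1 : ℝ) else 0)) ∂μ = 0 := by
    rw [integral_sub (integrable_const _) hs, integral_finsetSum _ fun i _ => hJi i]
    have e : ∀ i, ∫ ω, (if X (n + 1) ω = X n ω + dir d i then (1 : ℝ) else 0) ∂μ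
        = ∫ ω, ((A i * ρ n ω * (A i)ᴴ).trace).re ∂μ := by
      intro i
      rw [← integral_condExp (ℱ.le n)]
      exact integral_congr_ae (hQT.prob n i)
    have hi : ∀ i, Integrable (fun ω => ((A i * ρ n ω * (A i)ᴴ).trace).re) μ := fun i =>
      integrable_condExp.congr (hQT.prob n i)
    simp only [e]
    rw [← integral_finsetSum _ fun i _ => hi i]
    rw [integral_congr_ae (f := fun ω => ∑ i, ((A i * ρ n ω * (A i)ᴴ).trace).re)
      (g := fun _ => (1:ℝ))]
    · simp
    · filter_upwards [hQT.density n] with ω hd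
      have h1 : ∑ i, (A i * ρ n ω * (A i)ᴴ).trace = 1 := by
        rw [← hd.2]
        have : ∀ i, (A i * ρ n ω * (A i)ᴴ).trace = (((A i)ᴴ * A i) * ρ n ω).trace := by
          intro i
          rw [Matrix.trace_mul_comm, Matrix.mul_assoc]
        simp only [this]
        rw [← Matrix.trace_sum, ← Finset.sum_mul, hA, Matrix.one_mul]
      rw [← Complex.re_sum, h1]; simp
  have := (integral_eq_zero_iff_of_nonneg (fun ω => sub_nonneg.2 (hle ω))
    ((integrable_const _).sub hs)).1 hint
  filter_upwards [this] with ω h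
  simp only [Pi.zero_apply] at h
  linarith

/-- (Mutual singularity of the conditioned measures.) Under (H1'),
(H2), (H3), for each `j`, under `ℙ_ρ^{(j)} = (p_∞^{(j)}/p_0^{(j)}) ℙ_ρ` the frequencies
of jumps satisfy `N_n(i)/n → m_i^{(j)} = Tr(A_i ρ_∞^{(j)} A_i^*)` a.s. for every
direction `i`, and consequently the measures `ℙ_ρ^{(1)}, …, ℙ_ρ^{(N)}` are pairwise
mutually singular. -/
theorem stmt19 {k d N : ℕ} (hd : 1 ≤ d)
    (A : Fin (2 * d) → Matrix (Fin k) (Fin k) ℂ)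
    (hA : ∑ j, (A j)ᴴ * A j = 1)
    (P : Fin N → Matrix (Fin k) (Fin k) ℂ)
    (hsa : ∀ j, (P j)ᴴ = P j) (hidem : ∀ j, P j * P j = P j)
    (horth : ∀ j j', j ≠ j' → P j * P j' = 0)
    (hsum : ∑ j, P j = 1)
    (hcomm : ∀ (i : Fin (2 * d)) (j : Fin N), P j * A i = A i * P j)
    (ρinfj : Fin N → Matrix (Fin k) (Fin k) ℂ)
    (hρinfj : ∀ j, IsDensity (ρinfj j) ∧ P j * ρinfj j * P j = ρinfj j)
    (hinvj : ∀ j, (∑ i, (A i * P j) * ρinfj j * (A i * P j)ᴴ) = ρinfj j)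
    (huniqj : ∀ j σ, IsDensity σ → P j * σ * P j = σ →
      (∑ i, (A i * P j) * σ * (A i * P j)ᴴ) = σ → σ = ρinfj j)
    (hm : ∀ j j', j ≠ j' →
      (fun i : Fin (2 * d) => ((A i * ρinfj j * (A i)ᴴ).trace).re) ≠
        (fun i : Fin (2 * d) => ((A i * ρinfj j' * (A i)ᴴ).trace).re))
    {Ω : Type} {mΩ : MeasurableSpace Ω} (μ : Measure Ω) [IsProbabilityMeasure μ]
    (ℱ : Filtration ℕ mΩ)
    (ρ : ℕ → Ω → Matrix (Fin k) (Fin k) ℂ) (X : ℕ → Ω → Fin d → ℤ)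
    (hQT : IsQTraj A μ ℱ ρ X)
    (ρ₀ : Matrix (Fin k) (Fin k) ℂ) (hρ₀ : IsDensity ρ₀)
    (hinit : ∀ ω, ρ 0 ω = ρ₀)
    (hp₀ : ∀ j, 0 < ((P j * ρ₀).trace).re)
    (pinf : Fin N → Ω → ℝ)
    (has : ∀ j, ∀ᵐ ω ∂μ,
      Tendsto (fun n => ((P j * ρ n ω).trace).re) atTop (nhds (pinf j ω)))
    (μj : Fin N → Measure Ω)
    (hμj : ∀ j, μj j =
      μ.withDensity (fun ω => ENNReal.ofReal (pinf j ω / ((P j * ρ₀).trace).re))) :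
    (∀ (j : Fin N) (i : Fin (2 * d)), ∀ᵐ ω ∂(μj j),
      Tendsto
        (fun n : ℕ =>
          (((Finset.Icc 1 n).filter fun s => X s ω - X (s - 1) ω = dir d i).card : ℝ) / n)
        atTop (nhds (((A i * ρinfj j * (A i)ᴴ).trace).re))) ∧
    (∀ j j', j ≠ j' → Measure.MutuallySingular (μj j) (μj j')) := by
  have hfreq : ∀ (j : Fin N) (i : Fin (2 * d)), ∀ᵐ ω ∂(μj j),
      Tendsto
        (fun n : ℕ =>
          (((Finset.Icc 1 n).filter fun s => X s ω - X (s - 1) ω = dir d i).card : ℝ) / n)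
        atTop (nhds (((A i * ρinfj j * (A i)ᴴ).trace).re)) := by
    intro j i
    have hmeas : AEMeasurable (pinf j) μ := by
      refine aemeasurable_of_tendsto_metrizable_ae atTop (fun n => ?_) (has j)
      have h1 := meas_trace ((hQT.adapted_ρ n).mono (ℱ.le n) le_rfl) (P j) 1
      simp only [Matrix.mul_one] at h1
      exact (Complex.measurable_re.comp h1).aemeasurable
    rw [hμj j, ae_withDensity_iff' (hmeas.div_const _).ennreal_ofReal]
    filter_upwards [has j, ce_mat A μ ℱ ρ X hQT, ae_all_iff.2 (jump_sum A hA μ ℱ ρ X hQT),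
      ae_all_iff.2 hQT.density] with ω h1 h2 h3 h4 h5
    have hp : 0 < pinf j ω := by
      by_contra hcon
      apply h5
      rw [ENNReal.ofReal_eq_zero]
      exact div_nonpos_of_nonpos_of_nonneg (not_lt.1 hcon) (hp₀ j).le
    have key := det_part A (P j) (hsa j) (hidem j) (fun i => hcomm i j) (ρinfj j) (huniqj j)
      (fun n => ρ n ω) h4
      (fun i s => if X (s + 1) ω = X s ω + dir d i then (1 : ℝ) else 0)
      (fun i s => by split_ifs <;> simp) h3 h2 (pinf j ω) hp h1 i
    refine key.congr fun n => ?_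
    rw [div_eq_inv_mul, Finset.card_filter]
    congr 1
    push_cast
    have hI : Finset.Icc 1 n = Finset.Ico (0 + 1) (n + 1) := by
      ext s; simp only [Finset.mem_Icc, Finset.mem_Ico]; omega
    rw [Finset.range_eq_Ico, hI,
      ← Finset.sum_Ico_add' (fun s => if X s ω - X (s - 1) ω = dir d i then (1:ℝ) else 0) 0 n 1]
    refine Finset.sum_congr rfl fun s _ => ?_
    simp [sub_eq_iff_eq_add']
  refine ⟨hfreq, fun j j' hjj => ?_⟩
  obtain ⟨i, hi⟩ := Function.ne_iff.1 (hm j j' hjj)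
  refine Measure.MutuallySingular.mk (ae_iff.1 (hfreq j i)) (ae_iff.1 (hfreq j' i)) ?_
  intro ω _
  by_contra hcon
  simp only [Set.mem_union, not_or, Set.mem_ofPred_eq, not_not] at hcon
  exact hi (tendsto_nhds_unique hcon.1 hcon.2)
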